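/- Let R be a positively graded ring with R_0 a field, f a homogeneous non-zero-divisor in a graded ideal I with deg f = indeg(I), and g ∈ I⁻¹ homogeneous with f g a unit of R. Then the multiplication map ψ : R(−indeg(I)) → I sending 1 to (fg)⁻¹ f, composed with multiplication by g, is the identity on R(−indeg(I)); hence R(−indeg(I)) is a direct summand of I as a graded R-module. -/

import Mathlib

/-- R positively graded with R₀ a field, f a homogeneous
non-zero-divisor in a graded ideal I with deg f = d = indeg(I), and g ∈ I⁻¹
homogeneous (of degree −d) such that f·g is a unit u of R.  Then multiplication
ψ : R(−d) → I, 1 ↦ (fg)⁻¹ f, composed with the multiplication-by-g map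
φ : I → R(−d), is the identity on R(−d); hence R(−d) is a direct summand of I
as a graded R-module.  (g lives in the total quotient ring Q(R); "g ∈ I⁻¹" means
g·I ⊆ R, and homogeneity of g of degree −d means g·(I ∩ 𝒜 n) ⊆ 𝒜 (n−d).) -/
theorem stmt19 (R : Type*) [CommRing R] (𝒜 : ℕ → AddSubgroup R) [GradedRing 𝒜]
    (hfield : ∀ x ∈ 𝒜 0, x ≠ 0 → ∃ y ∈ 𝒜 0, x * y = 1)
    (I : Ideal R)
    (hIhom : ∀ (i : ℕ) (x : R), x ∈ I → (DirectSum.decompose 𝒜 x i : R) ∈ I)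
    (d : ℕ) (f : R) (hfI : f ∈ I) (hfd : f ∈ 𝒜 d) (hf : f ∈ nonZeroDivisors R)
    (hdmin : ∀ i, i < d → ∀ x ∈ I, x ∈ 𝒜 i → x = 0)
    (g : Localization (nonZeroDivisors R))
    (hgI : ∀ a ∈ I, ∃ r : R,
      g * algebraMap R (Localization (nonZeroDivisors R)) a =
        algebraMap R (Localization (nonZeroDivisors R)) r)
    (hghom : ∀ (n : ℕ), ∀ a ∈ I, a ∈ 𝒜 n → ∀ r : R,
      g * algebraMap R (Localization (nonZeroDivisors R)) a =
        algebraMap R (Localization (nonZeroDivisors R)) r → r ∈ 𝒜 (n - d))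
    (u : R)
    (hu : algebraMap R (Localization (nonZeroDivisors R)) u =
      algebraMap R (Localization (nonZeroDivisors R)) f * g)
    (huunit : IsUnit u) :
    ∃ (φ : ↥I →ₗ[R] R) (ψ : R →ₗ[R] ↥I),
      (∀ a : ↥I, algebraMap R (Localization (nonZeroDivisors R)) (φ a) =
        g * algebraMap R (Localization (nonZeroDivisors R)) (a : R)) ∧
      ((ψ 1 : ↥I) : R) = (↑huunit.unit⁻¹ : R) * f ∧
      φ.comp ψ = LinearMap.id ∧
      ((ψ 1 : ↥I) : R) ∈ 𝒜 d ∧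
      (∀ (n : ℕ) (a : ↥I), (a : R) ∈ 𝒜 (n + d) → φ a ∈ 𝒜 n) := by
  have hinj : Function.Injective (algebraMap R (Localization (nonZeroDivisors R))) :=
    IsLocalization.injective _ le_rfl
  choose r hr using fun a : ↥I => hgI a a.2
  let φ : ↥I →ₗ[R] R :=
    { toFun := r
      map_add' := fun a b => hinj (by
        rw [map_add, ← hr, ← hr, ← hr, Submodule.coe_add, map_add, mul_add])
      map_smul' := fun c a => hinj (by
        rw [RingHom.id_apply, smul_eq_mul, map_mul, ← hr, ← hr, Submodule.coe_smul,
          smul_eq_mul, map_mul, mul_left_comm]) }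
  have hφ (a : ↥I) : algebraMap R (Localization (nonZeroDivisors R)) (φ a) =
      g * algebraMap R (Localization (nonZeroDivisors R)) (a : R) := (hr a).symm
  have hφf : φ ⟨f, hfI⟩ = u := hinj (by rw [hφ, hu, mul_comm])
  have hu0 : u ∈ 𝒜 0 := by
    simpa using hghom d f hfI hfd u (by rw [hu, mul_comm])
  have hinv : (↑huunit.unit⁻¹ : R) ∈ 𝒜 0 := by
    by_cases hzero : u = 0
    · have : Subsingleton R := isUnit_zero_iff.mp (hzero ▸ huunit) |> subsingleton_of_zero_eq_one
      rw [Subsingleton.elim (↑huunit.unit⁻¹ : R) 0]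
      exact zero_mem _
    · obtain ⟨y, hy, huy⟩ := hfield u hu0 hzero
      rwa [Units.inv_eq_of_mul_eq_one_right (u := huunit.unit) huy]
  let ψ : R →ₗ[R] ↥I :=
    LinearMap.toSpanSingleton R ↥I ((↑huunit.unit⁻¹ : R) • ⟨f, hfI⟩)
  have hψ : ψ 1 = (↑huunit.unit⁻¹ : R) • ⟨f, hfI⟩ := LinearMap.toSpanSingleton_apply_one ..
  refine ⟨φ, ψ, hφ, by rw [hψ]; rfl, LinearMap.ext_ring ?_, ?_, fun n a ha => ?_⟩
  · rw [LinearMap.comp_apply, hψ, map_smul, hφf, smul_eq_mul, huunit.val_inv_mul,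
      LinearMap.id_apply]
  · rw [hψ]
    simpa using SetLike.mul_mem_graded hinv hfd
  · simpa using hghom (n + d) a a.2 ha (φ a) (hφ a).symm
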